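/- Let φ : X → Y be a Lipschitz map between metric measure spaces where X carries the measure ℋ^ν and Y the measure ℋ^{ν̃}, with ν ≥ ν̃. If A ⊆ X satisfies ℋ^ν(A) = 0, then ∫_Y ℋ^{ν−ν̃}(φ^{-1}(t) ∩ A) dℋ^{ν̃}(t) = 0; i.e., for ℋ^{ν̃}-almost every t ∈ Y, the level set slice φ^{-1}(t) ∩ A has ℋ^{ν−ν̃}-measure zero. -/

import Mathlib

open MeasureTheory

/-!
The core is a weak-type Eilenberg inequality: if `φ` is `α`-Hölder with constant `C`, then
`c * ℋ^s {t | c < ℋ^p (φ⁻¹ {t} ∩ A)} ≤ 4 * 5 ^ s * C ^ s * ℋ^(p + α * s) A`.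
A cover of `A` by small sets `E i` bounds the size of the slice over `t` by the sum of
`diam (E i) ^ p` over those `i` with `t ∈ φ '' (E i ∩ A)`. For finitely many sets, the content of a
superlevel set of this weighted sum is estimated by choosing a disjoint Vitali subfamily of the
images, subtracting a constant from its weights, and repeating; since the subfamily is disjoint,
each step lowers the sum at every point by at most that constant.
-/

open Set Filter Metric OuterMeasure
open scoped ENNReal NNReal Topology

section PseudoEMetric

variable {X ι : Type*} [PseudoEMetricSpace X]

lemma ediam_iUnion_le_of_inter_nonempty {U : ι → Set X} {S : Set X} {D : ℝ≥0∞}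
    (hmeet : ∀ i, (U i ∩ S).Nonempty) (hD : ∀ i, ediam (U i) ≤ D) :
    ediam (⋃ i, U i) ≤ D + ediam S + D := by
  refine ediam_le fun x hx y hy ↦ ?_
  obtain ⟨i, hxi⟩ := mem_iUnion.1 hx
  obtain ⟨j, hyj⟩ := mem_iUnion.1 hy
  obtain ⟨p, hpi, hpS⟩ := hmeet i
  obtain ⟨q, hqj, hqS⟩ := hmeet j
  calc edist x y ≤ edist x p + edist p q + edist q y := edist_triangle4 _ _ _ _
    _ ≤ D + ediam S + D := by
      gcongr
      · exact (edist_le_ediam_of_mem hxi hpi).trans (hD i)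
      · exact edist_le_ediam_of_mem hpS hqS
      · exact (edist_le_ediam_of_mem hqj hyj).trans (hD j)

lemma exists_disjoint_subfamily_ediam_le (S : ι → Set X) (I : Finset ι)
    (hS : ∀ i ∈ I, ediam (S i) ≠ ∞) :
    ∃ J ⊆ I, (J : Set ι).PairwiseDisjoint S ∧ (∀ j ∈ J, (S j).Nonempty) ∧
      ∃ T : ι → Set X, (∀ j, ediam (T j) ≤ 5 * ediam (S j)) ∧
        ⋃ i ∈ I, S i ⊆ ⋃ j ∈ J, T j := by
  classical
  set I' := {i ∈ I | (S i).Nonempty}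
  have hfin : ∀ i ∈ I', ediam (S i) ≠ ∞ := fun i hi ↦ hS i (Finset.mem_filter.1 hi).1
  obtain ⟨u, huI, hdisj, hcov⟩ := Vitali.exists_disjoint_subfamily_covering_enlargement S
    (I' : Set ι) (fun i ↦ (ediam (S i)).toReal) 2 one_lt_two (fun _ _ ↦ ENNReal.toReal_nonneg)
    (∑ i ∈ I', (ediam (S i)).toReal)
    (fun i hi ↦ Finset.single_le_sum (f := fun i ↦ (ediam (S i)).toReal)
      (fun _ _ ↦ ENNReal.toReal_nonneg) hi)
    (fun i hi ↦ (Finset.mem_filter.1 hi).2)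
  lift u to Finset ι using I'.finite_toSet.subset huI
  have huI : u ⊆ I' := by exact_mod_cast huI
  let N : ι → Set ι := fun j ↦ {i | (S i ∩ S j).Nonempty ∧ ediam (S i) ≤ 2 * ediam (S j)}
  refine ⟨u, huI.trans (Finset.filter_subset _ _), hdisj,
    fun j hj ↦ (Finset.mem_filter.1 (huI hj)).2, fun j ↦ ⋃ i : N j, S i, fun j ↦ ?_, ?_⟩
  · calc ediam (⋃ i : N j, S i) ≤ 2 * ediam (S j) + ediam (S j) + 2 * ediam (S j) :=
          ediam_iUnion_le_of_inter_nonempty (fun i ↦ i.2.1) fun i ↦ i.2.2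
      _ = 5 * ediam (S j) := by ring
  · refine iUnion₂_subset fun i hi y hy ↦ ?_
    have hiI' : i ∈ I' := Finset.mem_filter.2 ⟨hi, y, hy⟩
    obtain ⟨j, hj, hmeet, hle⟩ := hcov i hiI'
    have hle' : ediam (S i) ≤ 2 * ediam (S j) := by
      rwa [← ENNReal.toReal_le_toReal (hfin i hiI')
        (ENNReal.mul_ne_top ENNReal.ofNat_ne_top (hfin j (huI hj))), ENNReal.toReal_mul]
    exact mem_biUnion hj (mem_iUnion.2 ⟨⟨i, hmeet, hle'⟩, hy⟩)

/-- The gauge `diam(A) ^ s` of the Hausdorff measure of dimension `s`, with value `0` on the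
empty set also for `s ≤ 0`. -/
noncomputable def ediamPow (s : ℝ) (A : Set X) : ℝ≥0∞ := ⨆ _ : A.Nonempty, ediam A ^ s

lemma ediamPow_of_nonempty {s : ℝ} {A : Set X} (hA : A.Nonempty) : ediamPow s A = ediam A ^ s := by
  simp [ediamPow, hA]

@[simp]
lemma ediamPow_empty (s : ℝ) : ediamPow s (∅ : Set X) = 0 := by
  simp [ediamPow]

lemma ediamPow_mono {s : ℝ} (hs : 0 ≤ s) {A B : Set X} (hAB : A ⊆ B) :
    ediamPow s A ≤ ediamPow s B :=
  iSup_mono' fun hA ↦ ⟨hA.mono hAB, ENNReal.rpow_le_rpow (ediam_mono hAB) hs⟩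

lemma ediamPow_mul_ediamPow {s t : ℝ} (hs : 0 ≤ s) (ht : 0 ≤ t) (A : Set X) :
    ediamPow s A * ediamPow t A = ediamPow (s + t) A := by
  rcases A.eq_empty_or_nonempty with rfl | hA
  · simp
  · simp only [ediamPow_of_nonempty hA, ENNReal.rpow_add_of_nonneg _ _ hs ht]

lemma ediamPow_image_le_of_holderOnWith {Y : Type*} [PseudoEMetricSpace Y] {φ : X → Y} {C α : ℝ≥0}
    {A : Set X} (hφ : HolderOnWith C α φ A) {s : ℝ} (hs : 0 ≤ s) :
    ediamPow s (φ '' A) ≤ C ^ s * ediamPow (α * s) A := by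
  rcases A.eq_empty_or_nonempty with rfl | hA
  · simp
  · rw [ediamPow_of_nonempty hA, ediamPow_of_nonempty (hA.image φ), ENNReal.rpow_mul,
      ← ENNReal.mul_rpow_of_nonneg _ _ hs]
    exact ENNReal.rpow_le_rpow hφ.ediam_image_le hs

end PseudoEMetric

section OuterMeasure

variable {α ι : Type*} (μ : OuterMeasure α)

lemma sum_indicator_le_one_of_pairwiseDisjoint {S : ι → Set α} {J : Finset ι}
    (hJ : (J : Set ι).PairwiseDisjoint S) (x : α) :
    ∑ j ∈ J, (S j).indicator (1 : α → ℝ≥0∞) x ≤ 1 := by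
  rw [← Finset.indicator_biUnion_apply J S hJ]
  exact indicator_le_self _ _ x

lemma sum_mul_eq_sum_sub_mul_add [DecidableEq ι] {I J : Finset ι} (hJI : J ⊆ I)
    {a : ι → ℝ≥0∞} {m : ℝ≥0∞} (hm : ∀ j ∈ J, m ≤ a j) (f : ι → ℝ≥0∞) :
    ∑ i ∈ I, a i * f i =
      ∑ i ∈ I, (a i - if i ∈ J then m else 0) * f i + m * ∑ j ∈ J, f j := by
  have hsplit : m * ∑ j ∈ J, f j = ∑ i ∈ I, (if i ∈ J then m else 0) * f i := by
    simp only [ite_mul, zero_mul, Finset.sum_ite_mem, Finset.inter_eq_right.2 hJI, Finset.mul_sum]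
  rw [hsplit, ← Finset.sum_add_distrib]
  refine Finset.sum_congr rfl fun i _ ↦ ?_
  rw [← add_mul, tsub_add_cancel_of_le]
  split_ifs with hi
  exacts [hm i hi, zero_le]

/-- The smallest weight `m` of a disjoint subfamily `J` is subtracted from all weights of `J`, which
lowers the weighted sum at each point by at most `m` and makes one weight vanish. -/
lemma mul_measure_le_sum_of_disjoint_cover {S : ι → Set α} {g : ι → ℝ≥0∞}
    (hcover : ∀ I : Finset ι, ∃ J ⊆ I, (J : Set ι).PairwiseDisjoint S ∧
      μ (⋃ i ∈ I, S i) ≤ ∑ j ∈ J, g j) (I : Finset ι) (a : ι → ℝ≥0∞) (c : ℝ≥0∞) :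
    c * μ {x | c ≤ ∑ i ∈ I, a i * (S i).indicator 1 x} ≤ ∑ i ∈ I, a i * g i := by
  classical
  induction I using Finset.strongInduction generalizing a c with
  | H I ih =>
  rcases eq_or_ne c 0 with rfl | hc
  · simp
  set B := {x | c ≤ ∑ i ∈ I, a i * (S i).indicator 1 x}
  obtain ⟨J, hJI, hdisj, hJ⟩ := hcover I
  have hBJ : μ B ≤ ∑ j ∈ J, g j := by
    refine (measure_mono fun x hx ↦ ?_).trans hJ
    obtain ⟨i, hi, hne⟩ := Finset.exists_ne_zero_of_sum_ne_zero (hc.bot_lt.trans_le hx).ne'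
    exact mem_biUnion hi (mem_of_indicator_ne_zero (right_ne_zero_of_mul hne))
  by_cases! hcJ : ∀ j ∈ J, c ≤ a j
  · calc c * μ B ≤ ∑ j ∈ J, c * g j := by rw [← Finset.mul_sum]; gcongr
      _ ≤ ∑ j ∈ J, a j * g j := Finset.sum_le_sum fun j hj ↦ by gcongr; exact hcJ j hj
      _ ≤ ∑ i ∈ I, a i * g i := Finset.sum_le_sum_of_subset hJI
  obtain ⟨k, hkJ, hkc⟩ := hcJ
  obtain ⟨j₀, hj₀, hmin⟩ := J.exists_min_image a ⟨k, hkJ⟩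
  set m := a j₀
  have hmc : m ≤ c := (hmin k hkJ).trans hkc.le
  set b : ι → ℝ≥0∞ := fun i ↦ a i - if i ∈ J then m else 0
  have herase : ∀ f : ι → ℝ≥0∞, ∑ i ∈ I.erase j₀, b i * f i = ∑ i ∈ I, b i * f i := fun f ↦
    Finset.sum_erase I (by simp [b, m, hj₀])
  have hBb : B ⊆ {x | c - m ≤ ∑ i ∈ I.erase j₀, b i * (S i).indicator 1 x} := by
    intro x (hx : c ≤ _)
    rw [sum_mul_eq_sum_sub_mul_add hJI hmin] at hx
    rw [mem_ofPred_eq, herase, tsub_le_iff_right]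
    refine hx.trans (add_le_add_right ?_ _)
    exact mul_le_of_le_one_right' (sum_indicator_le_one_of_pairwiseDisjoint hdisj x)
  calc c * μ B = (c - m) * μ B + m * μ B := by rw [← add_mul, tsub_add_cancel_of_le hmc]
    _ ≤ ∑ i ∈ I.erase j₀, b i * g i + m * ∑ j ∈ J, g j := by
      gcongr
      exact (mul_le_mul_right (measure_mono hBb) _).trans
        (ih _ (Finset.erase_ssubset (hJI hj₀)) b (c - m))
    _ = ∑ i ∈ I, a i * g i := by rw [herase, sum_mul_eq_sum_sub_mul_add hJI hmin]

lemma exists_ge_tsum_nat_add_le (w : ℕ → ℝ≥0∞) {ε : ℝ≥0∞} (hε : ε ≠ 0) (m : ℕ) :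
    ∃ n ≥ m, ∑' i, w (i + n) ≤ ε * ∑' i, w i := by
  rcases eq_or_ne (∑' i, w i) 0 with hw | hw
  · exact ⟨m, le_rfl, by simp_all [ENNReal.tsum_eq_zero]⟩
  rcases eq_or_ne (∑' i, w i) ∞ with hw' | hw'
  · exact ⟨m, le_rfl, by simp [hw', hε]⟩
  have hpos : 0 < ε * ∑' i, w i := pos_iff_ne_zero.2 (mul_ne_zero hε hw)
  exact ((eventually_ge_atTop m).and
    ((ENNReal.tendsto_sum_nat_add w hw').eventually_le_const hpos)).exists

lemma exists_finset_cover_sum_le (w : ℕ → ℝ≥0∞) {ε : ℝ≥0∞} (hε : ε ≠ 0) :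
    ∃ I : ℕ → Finset ℕ, (∀ i, ∃ j, i ∈ I j) ∧
      ∀ j, ∑ i ∈ I j, w i ≤ ε ^ j * ∑' i, w i := by
  have htail : ∀ j : ℕ, ∃ n, j ≤ n ∧ (j = 0 → n = 0) ∧
      ∑' i, w (i + n) ≤ ε ^ j * ∑' i, w i := by
    rintro (_ | j)
    · exact ⟨0, by simp⟩
    obtain ⟨n, hjn, hn⟩ := exists_ge_tsum_nat_add_le w (pow_ne_zero (j + 1) hε) (j + 1)
    exact ⟨n, hjn, by simp, hn⟩
  choose N hjN hN0 hN using htail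
  refine ⟨fun j ↦ Finset.Ico (N j) (N (j + 1)), fun i ↦ ?_, fun j ↦ ?_⟩
  · have hlt : ∀ n, i < N n → ∃ j, i ∈ Finset.Ico (N j) (N (j + 1)) := by
      intro n
      induction n with
      | zero => simp [hN0 0 rfl]
      | succ n ih =>
        intro hi
        rcases lt_or_ge i (N n) with h | h
        · exact ih h
        · exact ⟨n, Finset.mem_Ico.2 ⟨h, hi⟩⟩
    exact hlt (i + 1) (hjN (i + 1))
  · calc ∑ i ∈ Finset.Ico (N j) (N (j + 1)), w i
        = ∑ i ∈ Finset.range (N (j + 1) - N j), w (i + N j) := by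
          simp only [Finset.sum_Ico_eq_sum_range, add_comm]
      _ ≤ ∑' i, w (i + N j) := ENNReal.sum_le_tsum _
      _ ≤ ε ^ j * ∑' i, w i := hN j

lemma tsum_le_tsum_sum_of_cover {f : ι → ℝ≥0∞} {κ : Type*} {I : κ → Finset ι}
    (hI : ∀ i, ∃ j, i ∈ I j) : ∑' i, f i ≤ ∑' j, ∑ i ∈ I j, f i := by
  have huniv : ⋃ j, (I j : Set ι) = univ := by simpa [eq_univ_iff_forall] using hI
  calc ∑' i, f i = ∑' i : ⋃ j, (I j : Set ι), f i := by rw [huniv, tsum_univ]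
    _ ≤ ∑' j, ∑' i : (I j : Set ι), f i := ENNReal.tsum_iUnion_le_tsum _ _
    _ = ∑' j, ∑ i ∈ I j, f i := by simp only [Finset.tsum_subtype']

lemma exists_mul_inv_two_pow_le_of_le_tsum {f : ℕ → ℝ≥0∞} {c : ℝ≥0∞} (hc : c ≠ ∞)
    (hcf : c ≤ ∑' j, f j) : ∃ j, c * 2⁻¹ ^ (j + 1) ≤ f j := by
  by_contra! hlt
  have hsum : ∑' j : ℕ, c * 2⁻¹ ^ (j + 1) = c := by
    rw [ENNReal.tsum_mul_left, ENNReal.tsum_geometric_add_one, ENNReal.one_sub_inv_two, inv_inv,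
      ENNReal.inv_mul_cancel two_ne_zero ENNReal.ofNat_ne_top, mul_one]
  have hle : ∑' j, f j ≤ c := (ENNReal.tsum_le_tsum fun j ↦ (hlt j).le).trans_eq hsum
  have hltc : ∑' j, f j < c := (ENNReal.tsum_lt_tsum (ne_top_of_le_ne_top hc hle)
    (fun j ↦ (hlt j).le) (hlt 0)).trans_eq hsum
  exact hcf.not_gt hltc

/-- `ℕ` is cut into finite blocks whose total weights decay like `4⁻¹ ^ j`, and the threshold `c`
is spread over the blocks as `c * 2⁻¹ ^ (j + 1)`. -/
lemma mul_measure_le_tsum_of_mul_measure_le_sum {f : ℕ → α → ℝ≥0∞} {w : ℕ → ℝ≥0∞}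
    (hfw : ∀ (I : Finset ℕ) (c : ℝ≥0∞), c * μ {x | c ≤ ∑ i ∈ I, f i x} ≤ ∑ i ∈ I, w i)
    {c : ℝ≥0∞} (hc : c ≠ ∞) :
    c * μ {x | c ≤ ∑' i, f i x} ≤ 4 * ∑' i, w i := by
  obtain ⟨I, hI, hIw⟩ := exists_finset_cover_sum_le w (ε := 4⁻¹) (by simp)
  let B : ℕ → Set α := fun j ↦ {x | c * 2⁻¹ ^ (j + 1) ≤ ∑ i ∈ I j, f i x}
  have hsub : {x | c ≤ ∑' i, f i x} ⊆ ⋃ j, B j := fun x (hx : c ≤ ∑' i, f i x) ↦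
    mem_iUnion.2 (exists_mul_inv_two_pow_le_of_le_tsum hc (hx.trans (tsum_le_tsum_sum_of_cover hI)))
  have hB : ∀ j, c * μ (B j) ≤ 2 * 2⁻¹ ^ j * ∑' i, w i := by
    intro j
    have hone : (2 : ℝ≥0∞) ^ (j + 1) * 2⁻¹ ^ (j + 1) = 1 := by
      rw [← mul_pow, ENNReal.mul_inv_cancel two_ne_zero ENNReal.ofNat_ne_top, one_pow]
    have hquarter : (2 : ℝ≥0∞) * 4⁻¹ = 2⁻¹ := by
      rw [show (4 : ℝ≥0∞) = 2 * 2 by norm_num, ENNReal.mul_inv (by simp) (by simp), ← mul_assoc,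
        ENNReal.mul_inv_cancel two_ne_zero ENNReal.ofNat_ne_top, one_mul]
    calc c * μ (B j) = 2 ^ (j + 1) * (c * 2⁻¹ ^ (j + 1) * μ (B j)) := by
          rw [← one_mul (c * μ (B j)), ← hone]; ring
      _ ≤ 2 ^ (j + 1) * (4⁻¹ ^ j * ∑' i, w i) := by
          gcongr _ * ?_
          exact (hfw (I j) _).trans (hIw j)
      _ = 2 * (2 * 4⁻¹) ^ j * ∑' i, w i := by ring
      _ = 2 * 2⁻¹ ^ j * ∑' i, w i := by rw [hquarter]
  calc c * μ {x | c ≤ ∑' i, f i x} ≤ c * ∑' j, μ (B j) := by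
        gcongr
        exact (measure_mono hsub).trans (measure_iUnion_le B)
    _ ≤ ∑' j : ℕ, 2 * 2⁻¹ ^ j * ∑' i, w i := by
        rw [← ENNReal.tsum_mul_left]
        exact ENNReal.tsum_le_tsum hB
    _ = 4 * ∑' i, w i := by
        rw [ENNReal.tsum_mul_right, ENNReal.tsum_mul_left, ENNReal.tsum_geometric,
          ENNReal.one_sub_inv_two, inv_inv]
        norm_num

end OuterMeasure

section Hausdorff

variable {X : Type*} [EMetricSpace X]

/-- The size-`r` approximation `ℋ^s_r` of the `s`-dimensional Hausdorff measure, in which only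
covers by sets of diameter at most `r` compete. -/
noncomputable def hausdorffPremeasure (s : ℝ) (r : ℝ≥0∞) : OuterMeasure X :=
  mkMetric'.pre (fun A ↦ ediam A ^ s) r

lemma hausdorffPremeasure_antitone (s : ℝ) :
    Antitone (hausdorffPremeasure s : ℝ≥0∞ → OuterMeasure X) :=
  fun _ _ h ↦ mkMetric'.mono_pre _ h

lemma hausdorffPremeasure_le_ediamPow {s : ℝ} {r : ℝ≥0∞} {A : Set X} (hA : ediam A ≤ r) :
    hausdorffPremeasure s r A ≤ ediamPow s A := by
  rcases A.eq_empty_or_nonempty with rfl | hne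
  · simp
  · rw [ediamPow_of_nonempty hne]
    exact mkMetric'.pre_le hA

lemma le_hausdorffPremeasure {s : ℝ} {r b : ℝ≥0∞} {A : Set X}
    (h : ∀ E : ℕ → Set X, A ⊆ ⋃ i, E i → (∀ i, ediam (E i) ≤ r) → b ≤ ∑' i, ediamPow s (E i)) :
    b ≤ hausdorffPremeasure s r A := by
  rw [hausdorffPremeasure, mkMetric'.pre, boundedBy_apply]
  refine le_iInf₂ fun E hE ↦ ?_
  by_cases! hr : ∀ i, ediam (E i) ≤ r
  · simpa only [extend, hr, iInf_pos, ediamPow] using h E hE hr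
  · obtain ⟨i, hi⟩ := hr
    have hne : (E i).Nonempty := by
      rw [nonempty_iff_ne_empty]
      rintro h0
      simp [h0] at hi
    refine le_top.trans ((ENNReal.le_tsum i).trans' ?_)
    simp [extend, hne, hi.not_ge]

lemma hausdorffMeasure_eq_iSup_hausdorffPremeasure [MeasurableSpace X] [BorelSpace X] (s : ℝ)
    (A : Set X) :
    Measure.hausdorffMeasure s A = ⨆ n : ℕ, hausdorffPremeasure s (n : ℝ≥0∞)⁻¹ A := by
  rw [Measure.hausdorffMeasure, ← coe_mkMetric, mkMetric, mkMetric'.eq_iSup_nat, iSup_apply]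
  rfl

lemma hausdorffPremeasure_le_hausdorffMeasure [MeasurableSpace X] [BorelSpace X] (s : ℝ)
    {r : ℝ≥0∞} (hr : 0 < r) (A : Set X) :
    hausdorffPremeasure s r A ≤ Measure.hausdorffMeasure s A := by
  obtain ⟨n, hn⟩ := ENNReal.exists_inv_nat_lt hr.ne'
  rw [hausdorffMeasure_eq_iSup_hausdorffPremeasure]
  exact (hausdorffPremeasure_antitone s hn.le A).trans
    (le_iSup (fun n : ℕ ↦ hausdorffPremeasure s (n : ℝ≥0∞)⁻¹ A) n)

lemma exists_disjoint_subfamily_hausdorffPremeasure_le {ι : Type*} {s : ℝ} (hs : 0 ≤ s)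
    {r : ℝ≥0∞} {S : ι → Set X} (I : Finset ι) (hS : ∀ i ∈ I, ediam (S i) ≠ ∞)
    (hr : ∀ i ∈ I, 5 * ediam (S i) ≤ r) :
    ∃ J ⊆ I, (J : Set ι).PairwiseDisjoint S ∧
      hausdorffPremeasure s r (⋃ i ∈ I, S i) ≤ ∑ j ∈ J, 5 ^ s * ediamPow s (S j) := by
  obtain ⟨J, hJI, hdisj, hne, T, hT, hcov⟩ := exists_disjoint_subfamily_ediam_le S I hS
  refine ⟨J, hJI, hdisj, ?_⟩
  calc hausdorffPremeasure s r (⋃ i ∈ I, S i)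
      ≤ ∑ j ∈ J, hausdorffPremeasure s r (T j) :=
        (measure_mono hcov).trans (measure_biUnion_finset_le J T)
    _ ≤ ∑ j ∈ J, 5 ^ s * ediamPow s (S j) := Finset.sum_le_sum fun j hj ↦ by
        refine (mkMetric'.pre_le ((hT j).trans (hr j (hJI hj)))).trans ?_
        rw [ediamPow_of_nonempty (hne j hj), ← ENNReal.mul_rpow_of_nonneg _ _ hs]
        exact ENNReal.rpow_le_rpow (hT j) hs

lemma mul_hausdorffPremeasure_le_tsum {s : ℝ} (hs : 0 ≤ s) {r : ℝ≥0∞} {S : ℕ → Set X}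
    (hS : ∀ i, ediam (S i) ≠ ∞) (hr : ∀ i, 5 * ediam (S i) ≤ r) (a : ℕ → ℝ≥0∞) {c : ℝ≥0∞}
    (hc : c ≠ ∞) :
    c * hausdorffPremeasure s r {x | c ≤ ∑' i, a i * (S i).indicator 1 x} ≤
      4 * 5 ^ s * ∑' i, a i * ediamPow s (S i) := by
  calc c * hausdorffPremeasure s r {x | c ≤ ∑' i, a i * (S i).indicator 1 x}
      ≤ 4 * ∑' i, a i * (5 ^ s * ediamPow s (S i)) :=
        mul_measure_le_tsum_of_mul_measure_le_sum _ (fun I ↦ mul_measure_le_sum_of_disjoint_cover _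
          (fun I ↦ exists_disjoint_subfamily_hausdorffPremeasure_le hs I (fun i _ ↦ hS i)
            fun i _ ↦ hr i) I a) hc
    _ = 4 * 5 ^ s * ∑' i, a i * ediamPow s (S i) := by
        simp only [mul_left_comm _ ((5 : ℝ≥0∞) ^ s), ENNReal.tsum_mul_left, mul_assoc]

lemma hausdorffPremeasure_fiber_inter_le_tsum {Y : Type*} {φ : X → Y} {p : ℝ} (hp : 0 ≤ p)
    {ρ : ℝ≥0∞} {A : Set X} {E : ℕ → Set X} (hE : A ⊆ ⋃ i, E i) (hρ : ∀ i, ediam (E i) ≤ ρ) (t : Y) :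
    hausdorffPremeasure p ρ (φ ⁻¹' {t} ∩ A) ≤
      ∑' i, ediamPow p (E i) * (φ '' (E i ∩ A)).indicator 1 t := by
  have hcov : φ ⁻¹' {t} ∩ A ⊆ ⋃ i, φ ⁻¹' {t} ∩ (E i ∩ A) := by
    rw [← inter_iUnion, ← iUnion_inter]
    exact inter_subset_inter_right _ (subset_inter hE Subset.rfl)
  refine (measure_mono hcov).trans ((measure_iUnion_le _).trans (ENNReal.tsum_le_tsum fun i ↦ ?_))
  by_cases ht : t ∈ φ '' (E i ∩ A)
  · have hsub : φ ⁻¹' {t} ∩ (E i ∩ A) ⊆ E i := inter_subset_right.trans inter_subset_left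
    simpa [ht] using (hausdorffPremeasure_le_ediamPow ((ediam_mono hsub).trans (hρ i))).trans
      (ediamPow_mono hp hsub)
  · have hempty : φ ⁻¹' {t} ∩ (E i ∩ A) = ∅ :=
      eq_empty_of_forall_notMem fun x hx ↦ ht ⟨x, hx.2, hx.1⟩
    simp [hempty]

end Hausdorff

section Holder

variable {X Y : Type*} [EMetricSpace X] [EMetricSpace Y]

lemma mul_hausdorffPremeasure_setOf_le_fiber_le {φ : X → Y} {C α : ℝ≥0} {A : Set X}
    (hφ : HolderOnWith C α φ A) (hC : C ≠ 0) {p s : ℝ} (hp : 0 ≤ p) (hs : 0 ≤ s)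
    {δ ρ r c : ℝ≥0∞} (hδ : δ ≠ ∞) (hδρ : δ ≤ ρ) (hδr : 5 * (C * δ ^ (α : ℝ)) ≤ r) (hc : c ≠ ∞) :
    c * hausdorffPremeasure s r {t | c ≤ hausdorffPremeasure p ρ (φ ⁻¹' {t} ∩ A)} ≤
      4 * 5 ^ s * C ^ s * hausdorffPremeasure (p + α * s) δ A := by
  have hK₀ : 4 * 5 ^ s * (C : ℝ≥0∞) ^ s ≠ 0 := by simp [ENNReal.rpow_eq_zero_iff, hC]
  have hK : 4 * 5 ^ s * (C : ℝ≥0∞) ^ s ≠ ∞ := by finiteness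
  rw [← ENNReal.div_le_iff' hK₀ hK]
  refine le_hausdorffPremeasure fun E hE hEδ ↦ ?_
  rw [ENNReal.div_le_iff' hK₀ hK]
  have himage : ∀ i, ediam (φ '' (E i ∩ A)) ≤ C * δ ^ (α : ℝ) := fun i ↦
    hφ.ediam_image_inter_le_of_le (hEδ i)
  have hpow : ∀ i, ediamPow s (φ '' (E i ∩ A)) ≤ C ^ s * ediamPow (α * s) (E i) := fun i ↦
    (ediamPow_image_le_of_holderOnWith (hφ.mono inter_subset_right) hs).trans <| by
      gcongr
      exact ediamPow_mono (by positivity) inter_subset_left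
  calc c * hausdorffPremeasure s r {t | c ≤ hausdorffPremeasure p ρ (φ ⁻¹' {t} ∩ A)}
      ≤ c * hausdorffPremeasure s r
          {t | c ≤ ∑' i, ediamPow p (E i) * (φ '' (E i ∩ A)).indicator 1 t} := by
        gcongr with t
        exact hausdorffPremeasure_fiber_inter_le_tsum hp hE (fun i ↦ (hEδ i).trans hδρ) t
    _ ≤ 4 * 5 ^ s * ∑' i, ediamPow p (E i) * ediamPow s (φ '' (E i ∩ A)) :=
        mul_hausdorffPremeasure_le_tsum hs
          (fun i ↦ ne_top_of_le_ne_top (by finiteness) (himage i))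
          (fun i ↦ (mul_le_mul_right (himage i) 5).trans hδr) _ hc
    _ ≤ 4 * 5 ^ s * ∑' i, ediamPow p (E i) * (C ^ s * ediamPow (α * s) (E i)) := by
        gcongr with i
        exact hpow i
    _ = 4 * 5 ^ s * C ^ s * ∑' i, ediamPow (p + α * s) (E i) := by
        simp only [mul_left_comm _ ((C : ℝ≥0∞) ^ s),
          ediamPow_mul_ediamPow hp (mul_nonneg α.coe_nonneg hs), ENNReal.tsum_mul_left, mul_assoc]

variable [MeasurableSpace X] [BorelSpace X] [MeasurableSpace Y] [BorelSpace Y]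

lemma mul_hausdorffMeasure_setOf_le_premeasure_fiber_le {φ : X → Y} {C α : ℝ≥0} {A : Set X}
    (hφ : HolderOnWith C α φ A) (hC : C ≠ 0) (hα : 0 < α) {p s : ℝ} (hp : 0 ≤ p) (hs : 0 ≤ s)
    {ρ c : ℝ≥0∞} (hρ : 0 < ρ) (hc : c ≠ ∞) :
    c * Measure.hausdorffMeasure s {t | c ≤ hausdorffPremeasure p ρ (φ ⁻¹' {t} ∩ A)} ≤
      4 * 5 ^ s * C ^ s * Measure.hausdorffMeasure (p + α * s) A := by
  rw [hausdorffMeasure_eq_iSup_hausdorffPremeasure s, ENNReal.mul_iSup]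
  refine iSup_le fun n ↦ ?_
  have hlim : Tendsto (fun δ : ℝ≥0∞ ↦ 5 * C * δ ^ (α : ℝ)) (𝓝[>] 0) (𝓝 0) :=
    (ENNReal.tendsto_const_mul_rpow_nhds_zero_of_pos (by finiteness)
      (NNReal.coe_pos.2 hα)).mono_left nhdsWithin_le_nhds
  obtain ⟨δ, ⟨hδr, hδ⟩, hδ₀⟩ := ((hlim.eventually_le_const
    (ENNReal.inv_pos.2 (ENNReal.natCast_ne_top n))).and
    (nhdsWithin_le_nhds (Iio_mem_nhds (lt_min hρ ENNReal.zero_lt_top)))).and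
    self_mem_nhdsWithin |>.exists
  obtain ⟨hδρ, hδtop⟩ := lt_min_iff.1 hδ
  calc c * hausdorffPremeasure s (n : ℝ≥0∞)⁻¹ {t | c ≤ hausdorffPremeasure p ρ (φ ⁻¹' {t} ∩ A)}
      ≤ 4 * 5 ^ s * C ^ s * hausdorffPremeasure (p + α * s) δ A :=
        mul_hausdorffPremeasure_setOf_le_fiber_le hφ hC hp hs hδtop.ne hδρ.le
          (by rwa [← mul_assoc]) hc
    _ ≤ 4 * 5 ^ s * C ^ s * Measure.hausdorffMeasure (p + α * s) A := by
        gcongr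
        exact hausdorffPremeasure_le_hausdorffMeasure _ hδ₀ A

lemma mul_hausdorffMeasure_setOf_lt_fiber_le {φ : X → Y} {C α : ℝ≥0} {A : Set X}
    (hφ : HolderOnWith C α φ A) (hC : C ≠ 0) (hα : 0 < α) {p s : ℝ} (hp : 0 ≤ p) (hs : 0 ≤ s)
    {c : ℝ≥0∞} (hc : c ≠ ∞) :
    c * Measure.hausdorffMeasure s {t | c < Measure.hausdorffMeasure p (φ ⁻¹' {t} ∩ A)} ≤
      4 * 5 ^ s * C ^ s * Measure.hausdorffMeasure (p + α * s) A := by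
  let B : ℕ → Set Y := fun n ↦ {t | c < hausdorffPremeasure p (n : ℝ≥0∞)⁻¹ (φ ⁻¹' {t} ∩ A)}
  have hB : Monotone B := fun m n hmn t (ht : c < _) ↦ ht.trans_le <|
    hausdorffPremeasure_antitone p (ENNReal.inv_le_inv.2 (Nat.cast_le.2 hmn)) _
  have hUnion : {t | c < Measure.hausdorffMeasure p (φ ⁻¹' {t} ∩ A)} = ⋃ n, B n := by
    ext t
    simp [B, hausdorffMeasure_eq_iSup_hausdorffPremeasure, lt_iSup_iff]
  rw [hUnion, hB.measure_iUnion, ENNReal.mul_iSup]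
  refine iSup_le fun n ↦ ?_
  calc c * Measure.hausdorffMeasure s (B n)
      ≤ c * Measure.hausdorffMeasure s
          {t | c ≤ hausdorffPremeasure p (n : ℝ≥0∞)⁻¹ (φ ⁻¹' {t} ∩ A)} := by
        gcongr
        exact fun t (ht : c < _) ↦ mem_ofPred.2 ht.le
    _ ≤ 4 * 5 ^ s * C ^ s * Measure.hausdorffMeasure (p + α * s) A :=
        mul_hausdorffMeasure_setOf_le_premeasure_fiber_le hφ hC hα hp hs
          (ENNReal.inv_pos.2 (ENNReal.natCast_ne_top n)) hc

theorem stmt_17_general {φ : X → Y} {C α : ℝ≥0} {A : Set X} (hφ : HolderOnWith C α φ A)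
    (hα : 0 < α) {p s : ℝ} (hp : 0 ≤ p) (hs : 0 ≤ s)
    (hA : Measure.hausdorffMeasure (p + α * s) A = 0) :
    ∫⁻ t, Measure.hausdorffMeasure p (φ ⁻¹' {t} ∩ A)
      ∂(Measure.hausdorffMeasure s : Measure Y) = 0 := by
  have hφ' : HolderOnWith (C + 1) α φ A := hφ.mono_const le_self_add
  have hae : ∀ᵐ t ∂(Measure.hausdorffMeasure s : Measure Y),
      Measure.hausdorffMeasure p (φ ⁻¹' {t} ∩ A) ≤ 0 := by
    refine (ae_le_const_iff_forall_gt_measure_zero _ _).2 fun b hb ↦ ?_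
    obtain ⟨c, hc₀, hcb⟩ := exists_between hb
    have hweak := mul_hausdorffMeasure_setOf_lt_fiber_le hφ' (by positivity) hα hp hs hcb.ne_top
    rw [hA, mul_zero, nonpos_iff_eq_zero, mul_eq_zero] at hweak
    exact measure_mono_null (fun t ht ↦ hcb.trans_le ht) (hweak.resolve_left hc₀.ne')
  rw [lintegral_congr_ae (hae.mono fun t ht ↦ nonpos_iff_eq_zero.1 ht), lintegral_zero]

end Holder

/-- Consequence of the Eilenberg (coarea) inequality: if `φ` is Lipschitz and
`A` is `ℋ^ν`-null, then for `ℋ^ν̃`-almost every `t` the slice `φ⁻¹(t) ∩ A` is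
`ℋ^{ν−ν̃}`-null; equivalently, the integral of the slice measures vanishes. -/
theorem stmt_17 {X Y : Type*}
    [EMetricSpace X] [MeasurableSpace X] [BorelSpace X]
    [EMetricSpace Y] [MeasurableSpace Y] [BorelSpace Y]
    (φ : X → Y) (K : NNReal) (hφ : LipschitzWith K φ)
    (nu nut : ℝ) (hnut : 0 ≤ nut) (hle : nut ≤ nu)
    (A : Set X) (hA : Measure.hausdorffMeasure nu A = 0) :
    ∫⁻ t, Measure.hausdorffMeasure (nu - nut) (φ ⁻¹' {t} ∩ A)
        ∂(Measure.hausdorffMeasure nut : Measure Y) = 0 := by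
  exact stmt_17_general (hφ.lipschitzOnWith (s := A)).holderOnWith one_pos (sub_nonneg.2 hle) hnut
    (by simpa using hA)
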